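/- Let c₀, M, f_λ, g_λ, a_λ, b_λ be as follows: c₀ > 0 is the unique positive real with e^{−c₀²/4} = 2∫₀^{c₀} e^{−x²/4} dx, M = ∫₀^{c₀} e^{−x²/4} dx, f_λ(a) = 2M a^{λ−1} e^{−a²/4} − 4M ∫₀^a r^{λ−1} e^{−r²/4} dr, g_λ(b) = 2M b^{λ−1} e^{−b²/4} + 4M ∫₀^b r^{λ−1} e^{−r²/4} dr, a_λ = −2+√(2(1+λ)), b_λ = 2+√(2(1+λ)). Then for every λ > λ₀ := (28 + 11√7)/9, f_{λ+2}(a_{λ+2}) + g_{λ+2}(b_{λ+2}) < 2λ ( f_λ(a_λ) + g_λ(b_λ) ). -/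

import Mathlib

open Real MeasureTheory

/-- The weight `x ^ p * exp (-x ^ 2 / 4)`. -/
noncomputable def gaussWeight (p x : ℝ) : ℝ := x ^ p * exp (-x ^ 2 / 4)

/-- The boundary-minus-bulk functional; `ε = 1` gives the `f`-side and `ε = -1` the `g`-side. -/
noncomputable def gaussFunctional (p ε x : ℝ) : ℝ :=
  gaussWeight p x - 2 * ε * ∫ r in (0:ℝ)..x, gaussWeight p r

lemma gaussWeight_pos {p x : ℝ} (hx : 0 < x) : 0 < gaussWeight p x :=
  mul_pos (rpow_pos_of_pos hx p) (exp_pos _)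

lemma log_gaussWeight {p x : ℝ} (hx : 0 < x) :
    log (gaussWeight p x) = p * log x - x ^ 2 / 4 := by
  rw [gaussWeight, log_mul (rpow_pos_of_pos hx p).ne' (exp_pos _).ne', log_rpow hx, log_exp]
  ring

lemma continuous_gaussWeight {p : ℝ} (hp : 0 ≤ p) : Continuous (gaussWeight p) := by
  unfold gaussWeight
  exact (continuous_rpow_const hp).mul (by fun_prop)

lemma gaussWeight_add_one {p x : ℝ} (hx : 0 < x) :
    gaussWeight (p + 1) x = x * gaussWeight p x := by
  rw [gaussWeight, gaussWeight, rpow_add_one hx.ne']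
  ring

lemma hasDerivAt_gaussWeight {p x : ℝ} (h : x ≠ 0 ∨ 1 ≤ p) :
    HasDerivAt (gaussWeight p)
      (p * x ^ (p - 1) * exp (-x ^ 2 / 4) - x ^ p * exp (-x ^ 2 / 4) * x / 2) x := by
  have h1 := hasDerivAt_rpow_const (x := x) (p := p) h
  have h2 : HasDerivAt (fun y : ℝ => exp (-y ^ 2 / 4)) (exp (-x ^ 2 / 4) * (-(2 * x) / 4)) x := by
    have := (((hasDerivAt_pow 2 x).neg).div_const 4).exp
    simpa using this
  refine (h1.mul h2).congr_deriv ?_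
  ring

lemma hasDerivAt_gaussFunctional {p ε x : ℝ} (hp : 0 ≤ p) (hx : 0 < x) :
    HasDerivAt (gaussFunctional p ε)
      (gaussWeight (p - 1) x * (p - x ^ 2 / 2 - 2 * ε * x)) x := by
  have hI : HasDerivAt (fun y => ∫ r in (0:ℝ)..y, gaussWeight p r) (gaussWeight p x) x :=
    ((continuous_gaussWeight hp).integral_hasStrictDerivAt 0 x).hasDerivAt
  refine ((hasDerivAt_gaussWeight (p := p) (Or.inl hx.ne')).sub
    (hI.const_mul (2 * ε))).congr_deriv ?_
  have hw := gaussWeight_add_one (p := p - 1) hx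
  rw [sub_add_cancel] at hw
  have hw' : x ^ p * exp (-x ^ 2 / 4) = gaussWeight p x := rfl
  have hwp : p * x ^ (p - 1) * exp (-x ^ 2 / 4) = p * gaussWeight (p - 1) x := by
    rw [gaussWeight]; ring
  rw [hw', hwp, hw]
  ring

lemma integral_gaussWeight_add_one {p x : ℝ} (hp : 1 ≤ p) (hx : 0 ≤ x) :
    ∫ r in (0:ℝ)..x, gaussWeight (p + 1) r
      = 2 * p * (∫ r in (0:ℝ)..x, gaussWeight (p - 1) r) - 2 * gaussWeight p x := by
  have hc1 := continuous_gaussWeight (p := p - 1) (by linarith)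
  have hc2 := continuous_gaussWeight (p := p + 1) (by linarith)
  have hcont : Continuous fun r => p * gaussWeight (p - 1) r - gaussWeight (p + 1) r / 2 := by
    fun_prop
  have hFTC := intervalIntegral.integral_eq_sub_of_hasDerivAt (a := 0) (b := x)
    (f := gaussWeight p) (f' := fun r => p * gaussWeight (p - 1) r - gaussWeight (p + 1) r / 2)
    (fun r hr => by
      rw [Set.uIcc_of_le hx] at hr
      refine (hasDerivAt_gaussWeight (p := p) (x := r) (Or.inr hp)).congr_deriv ?_
      have h1 : r ^ (p + 1) = r ^ p * r := rpow_add_one' hr.1 (by linarith)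
      rw [gaussWeight, gaussWeight, h1]
      ring)
    (hcont.intervalIntegrable _ _)
  rw [intervalIntegral.integral_sub ((hc1.const_mul p).intervalIntegrable _ _)
    ((hc2.div_const 2).intervalIntegrable _ _), intervalIntegral.integral_const_mul,
    intervalIntegral.integral_div] at hFTC
  have h0 : gaussWeight p 0 = 0 := by
    rw [gaussWeight, zero_rpow (by linarith), zero_mul]
  rw [h0] at hFTC
  linarith

lemma gaussFunctional_recursion {l ε x : ℝ} (hl : 1 ≤ l) (hx : 0 < x)
    (h : x ^ 2 + 4 * ε * x = 2 * l) :
    2 * l * gaussFunctional (l - 1) ε x = gaussFunctional (l + 1) ε x := by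
  rw [gaussFunctional, gaussFunctional, integral_gaussWeight_add_one hl hx.le]
  have h1 := gaussWeight_add_one (p := l - 1) hx
  have h2 := gaussWeight_add_one (p := l) hx
  rw [sub_add_cancel] at h1
  rw [h2, h1]
  linear_combination (-gaussWeight (l - 1) x) * h

lemma hasDerivAt_gaussFunctional_shift {p ε t : ℝ} (hp : 0 ≤ p) (hε : ε ^ 2 = 1)
    (ht : 0 < t - 2 * ε) :
    HasDerivAt (fun t => gaussFunctional p ε (t - 2 * ε))
      (gaussWeight (p - 1) (t - 2 * ε) * (p + 2 - t ^ 2 / 2)) t := by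
  refine ((hasDerivAt_gaussFunctional (ε := ε) hp ht).comp_sub_const t (2 * ε)).congr_deriv ?_
  linear_combination (2 * gaussWeight (p - 1) (t - 2 * ε)) * hε

lemma hasDerivAt_gaussFunctional_sqrt {p ε k σ v : ℝ} (hp : 0 ≤ p) (hε : ε ^ 2 = 1)
    (ht : 2 < √(k + σ * v)) :
    HasDerivAt (fun v => gaussFunctional p ε (√(k + σ * v) - 2 * ε))
      (gaussWeight (p - 1) (√(k + σ * v) - 2 * ε) * (p + 2 - (k + σ * v) / 2)
        * (σ / (2 * √(k + σ * v)))) v := by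
  have hpos : 0 < k + σ * v := sqrt_pos.mp (by linarith)
  have hε' : ε ≤ 1 := by nlinarith
  have hlin : HasDerivAt (fun v => k + σ * v) σ v := by
    simpa using ((hasDerivAt_id v).const_mul σ).const_add k
  have h1 := hlin.sqrt hpos.ne'
  have h2 := hasDerivAt_gaussFunctional_shift (p := p) (t := √(k + σ * v)) hp hε (by linarith)
  rw [sq_sqrt hpos.le] at h2
  exact h2.comp v h1

lemma log_le_half_sub_inv {u : ℝ} (hu : 1 ≤ u) : log u ≤ (u - u⁻¹) / 2 := by
  rw [← sinh_log (by linarith)]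
  exact self_le_sinh_iff.mpr (log_nonneg hu)

lemma add_lt_add_of_mul_le {a b c d : ℝ} (hd : 0 < d) (hdc : d < c) (hca : c < a)
    (h : c * d ≤ a * b) : c + d < a + b := by
  have ha : 0 < a := by linarith
  have : 0 < a * ((a + b) - (c + d)) := by
    nlinarith [mul_pos (sub_pos.2 hca) (sub_pos.2 (hdc.trans hca))]
  have := pos_of_mul_pos_right this ha.le
  linarith

lemma gaussWeight_add_two_lt {l z T : ℝ} (hl : 0 < l) (hz : 0 < z) (hT : 2 < T)
    (hT2 : T ^ 2 = 2 * l + 4 + z) : gaussWeight l (T + 2) < gaussWeight l (T - 2) := by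
  have hm : 0 < T - 2 := by linarith
  have hp : 0 < T + 2 := by linarith
  rw [← log_lt_log_iff (gaussWeight_pos hp) (gaussWeight_pos hm), log_gaussWeight hp,
    log_gaussWeight hm]
  have hlog := log_le_half_sub_inv (u := (T + 2) / (T - 2)) (by rw [le_div_iff₀ hm]; linarith)
  rw [log_div hp.ne' hm.ne'] at hlog
  have he : ((T + 2) / (T - 2) - ((T + 2) / (T - 2))⁻¹) / 2 = 4 * T / (T ^ 2 - 4) := by
    have : T ^ 2 - 4 ≠ 0 := by nlinarith
    field_simp
    ring
  rw [he] at hlog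
  have h2 : l * (4 * T / (T ^ 2 - 4)) < 2 * T := by
    rw [mul_div_assoc', div_lt_iff₀ (by linarith)]
    rw [hT2]; nlinarith [mul_pos hz (show 0 < T by linarith)]
  nlinarith [mul_le_mul_of_nonneg_left hlog hl.le]

lemma log_ratio_bound {p d : ℝ} (hp : 3 ≤ p) (hd : 0 < d) (hdp : d * (p + 4) ≤ 4) :
    d * p * (d ^ 2 + 4 * p) / (2 * (p ^ 2 - d ^ 2))
      < 2 * p * (4 + d) / (p ^ 2 + 4 * p - p * d + d ^ 2) := by
  have hd1 : d < 1 := by nlinarith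
  have h1 : 0 < p ^ 2 - d ^ 2 := by nlinarith
  have h2 : 0 < p ^ 2 + 4 * p - p * d + d ^ 2 := by nlinarith
  have key : (d ^ 2 + 4 * p) * (p ^ 2 + 4 * p - p * d + d ^ 2)
      < (4 + d) * (p ^ 2 - d ^ 2) * (p + 4) := by
    have h3 : 0 < p ^ 3 + 8 * p ^ 2 - d * (p ^ 2 + 12 * p + 16) - 4 * d ^ 2 - d ^ 3 := by
      nlinarith [mul_nonneg (sub_nonneg.2 hdp) (by linarith : (0:ℝ) ≤ p), sq_nonneg d,
        mul_pos hd hd, mul_pos (mul_pos hd hd) hd, sq_nonneg (p - 3)]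
    nlinarith [mul_pos hd h3]
  rw [div_lt_div_iff₀ (by linarith) h2]
  have h4 : d * (p + 4) * ((d ^ 2 + 4 * p) * (p ^ 2 + 4 * p - p * d + d ^ 2))
      ≤ 4 * ((d ^ 2 + 4 * p) * (p ^ 2 + 4 * p - p * d + d ^ 2)) :=
    mul_le_mul_of_nonneg_right hdp (by positivity)
  have h5 : 0 < (p + 4) * p := by positivity
  have h6 : (p + 4) * (d * p * (d ^ 2 + 4 * p) * (p ^ 2 + 4 * p - p * d + d ^ 2))
      < (p + 4) * (2 * p * (4 + d) * (2 * (p ^ 2 - d ^ 2))) := by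
    nlinarith [mul_lt_mul_of_pos_left key (show 0 < 4 * p by linarith),
      mul_le_mul_of_nonneg_left h4 (show 0 ≤ p by linarith)]
  exact lt_of_mul_lt_mul_left h6 (by linarith)

lemma gaussWeight_sub_two_lt {l z t T : ℝ} (hl : 5 ≤ l) (hz : 0 < z) (hz2 : z ≤ 2)
    (ht : 3 < t) (hT : 3 < T) (ht2 : t ^ 2 = 2 * l + 4 - z) (hT2 : T ^ 2 = 2 * l + 4 + z) :
    gaussWeight l (T - 2) / T < 2 * l * gaussWeight (l - 2) (t - 2) / t := by
  obtain ⟨x, rfl⟩ : ∃ x, t = x + 2 := ⟨t - 2, by ring⟩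
  obtain ⟨X, rfl⟩ : ∃ X, T = X + 2 := ⟨T - 2, by ring⟩
  simp only [add_sub_cancel_right]
  have hx : 1 < x := by linarith
  have hX : 1 < X := by linarith
  have hxX : x < X := by nlinarith
  have hd := log_ratio_bound (p := x + X) (d := X - x) (by nlinarith) (by linarith) (by nlinarith)
  have hl2 : 2 * l = (x ^ 2 + X ^ 2) / 2 + 2 * (x + X) := by linarith
  have hlx : x ^ 2 < 2 * l := by nlinarith
  have hA := le_log_one_add_of_nonneg (x := 2 * l / x ^ 2 - 1)
    (by rw [sub_nonneg, le_div_iff₀ (by positivity)]; linarith)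
  rw [add_sub_cancel, log_div (by linarith) (by positivity), log_pow] at hA
  have hB := log_le_half_sub_inv (u := X / x) (by rw [le_div_iff₀ (by linarith)]; linarith)
  rw [log_div (by linarith) (by linarith)] at hB
  have hC : log (x + 2) ≤ log (X + 2) := log_le_log (by linarith) (by linarith)
  have hwX := gaussWeight_pos (p := l) (x := X) (by linarith)
  have hwx := gaussWeight_pos (p := l - 2) (x := x) (by linarith)
  rw [← log_lt_log_iff (by positivity) (by positivity), log_div hwX.ne' (by linarith),
    log_div (by positivity) (by linarith), log_mul (by linarith) hwx.ne',
    log_gaussWeight (by linarith), log_gaussWeight (by linarith)]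
  have hA' : 2 * (2 * l / x ^ 2 - 1) / (2 * l / x ^ 2 - 1 + 2)
      = 2 * (x + X) * (4 + (X - x)) / ((x + X) ^ 2 + 4 * (x + X) - (x + X) * (X - x)
        + (X - x) ^ 2) := by
    have e1 : 2 * (2 * l / x ^ 2 - 1) / (2 * l / x ^ 2 - 1 + 2)
        = 2 * (2 * l - x ^ 2) / (2 * l + x ^ 2) := by
      have hne : 2 * l + x ^ 2 ≠ 0 := by positivity
      have hne2 : 2 * l / x ^ 2 - 1 + 2 ≠ 0 := by
        have : 0 < 2 * l / x ^ 2 := by positivity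
        linarith
      rw [div_eq_div_iff hne2 hne]
      field_simp
      ring
    rw [e1, hl2, div_eq_div_iff (by positivity) (by nlinarith)]
    ring
  have hB' : l * ((X / x - (X / x)⁻¹) / 2) - (X ^ 2 - x ^ 2) / 4
      = (X - x) * (x + X) * ((X - x) ^ 2 + 4 * (x + X)) / (2 * ((x + X) ^ 2 - (X - x) ^ 2)) := by
    have e2 : (x + X) ^ 2 - (X - x) ^ 2 = 4 * (x * X) := by ring
    have hl3 : l = ((x ^ 2 + X ^ 2) / 2 + 2 * (x + X)) / 2 := by linarith
    rw [e2, hl3]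
    field_simp
    ring
  have hBl := mul_le_mul_of_nonneg_left hB (show 0 ≤ l by linarith)
  push_cast at hA
  nlinarith

lemma gaussWeight_mul_le {l z t T : ℝ} (hl : 5 ≤ l) (hz : 0 < z) (hz2 : z ≤ 2)
    (ht : 3 < t) (hT : 3 < T) (ht2 : t ^ 2 = 2 * l + 4 - z) (hT2 : T ^ 2 = 2 * l + 4 + z) :
    gaussWeight l (T - 2) / T * (gaussWeight l (T + 2) / T)
      ≤ 2 * l * gaussWeight (l - 2) (t - 2) / t * (2 * l * gaussWeight (l - 2) (t + 2) / t) := by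
  have h1 : 0 < T - 2 := by linarith
  have h2 : 0 < T + 2 := by linarith
  have h3 : 0 < t - 2 := by linarith
  have h4 : 0 < t + 2 := by linarith
  have g1 := gaussWeight_pos (p := l) h1
  have g2 := gaussWeight_pos (p := l) h2
  have g3 := gaussWeight_pos (p := l - 2) h3
  have g4 := gaussWeight_pos (p := l - 2) h4
  have htT : t < T := by nlinarith
  rw [← log_le_log_iff (by positivity) (by positivity), log_mul (by positivity) (by positivity),
    log_mul (by positivity) (by positivity), log_div g1.ne' (by linarith),
    log_div g2.ne' (by linarith), log_div (by positivity) (by linarith),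
    log_div (by positivity) (by linarith), log_mul (by linarith) g3.ne',
    log_mul (by linarith) g4.ne', log_gaussWeight h1, log_gaussWeight h2, log_gaussWeight h3,
    log_gaussWeight h4]
  have e1 : log (T - 2) + log (T + 2) = log (2 * l + z) := by
    rw [← log_mul h1.ne' h2.ne']; congr 1; linarith
  have e2 : log (t - 2) + log (t + 2) = log (2 * l - z) := by
    rw [← log_mul h3.ne' h4.ne']; congr 1; linarith
  have hC : log t ≤ log T := log_le_log (by linarith) htT.le
  have hm : 0 < 2 * l - z := by linarith
  have hA := log_le_half_sub_inv (u := (2 * l + z) / (2 * l - z))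
    (by rw [le_div_iff₀ hm]; linarith)
  rw [log_div (by linarith) hm.ne'] at hA
  have hA' : ((2 * l + z) / (2 * l - z) - ((2 * l + z) / (2 * l - z))⁻¹) / 2
      = 4 * l * z / (4 * l ^ 2 - z ^ 2) := by
    rw [show 4 * l ^ 2 - z ^ 2 = (2 * l + z) * (2 * l - z) by ring]
    field_simp
    ring
  have hB := log_le_sub_one_of_pos (x := (2 * l - z) / (2 * l)) (by positivity)
  rw [log_div hm.ne' (by linarith)] at hB
  have hB' : (2 * l - z) / (2 * l) - 1 = -(z / (2 * l)) := by
    field_simp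
    ring
  have hD : l * (4 * l * z / (4 * l ^ 2 - z ^ 2)) ≤ z + z / l := by
    have : z + z / l = z * (l + 1) / l := by field_simp
    rw [this, mul_div_assoc', div_le_div_iff₀ (by nlinarith) (by linarith)]
    have : 0 ≤ z * (4 * l ^ 2 - z ^ 2 * (l + 1)) := mul_nonneg hz.le (by
      nlinarith [show z ^ 2 ≤ 4 by nlinarith])
    nlinarith
  have hE : z / l = 2 * (z / (2 * l)) := by field_simp
  have hF := mul_le_mul_of_nonneg_left (hA.trans_eq hA') (show 0 ≤ l by linarith)
  nlinarith

lemma gaussWeight_pair_lt {l z t T : ℝ} (hl : 5 ≤ l) (hz : 0 < z) (hz2 : z ≤ 2)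
    (ht : 3 < t) (hT : 3 < T) (ht2 : t ^ 2 = 2 * l + 4 - z) (hT2 : T ^ 2 = 2 * l + 4 + z) :
    gaussWeight l (T - 2) / T + gaussWeight l (T + 2) / T
      < 2 * l * gaussWeight (l - 2) (t - 2) / t + 2 * l * gaussWeight (l - 2) (t + 2) / t :=
  add_lt_add_of_mul_le (div_pos (gaussWeight_pos (by linarith)) (by linarith))
    (div_lt_div_of_pos_right (gaussWeight_add_two_lt (by linarith) hz (by linarith) hT2)
      (by linarith))
    (gaussWeight_sub_two_lt hl hz hz2 ht hT ht2 hT2) (gaussWeight_mul_le hl hz hz2 ht hT ht2 hT2)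

lemma gaussFunctional_step {l : ℝ} (hl : 5 ≤ l) :
    gaussFunctional (l + 1) 1 (√(2 * l + 6) - 2) + gaussFunctional (l + 1) (-1) (√(2 * l + 6) + 2)
      < 2 * l * (gaussFunctional (l - 1) 1 (√(2 * l + 2) - 2)
        + gaussFunctional (l - 1) (-1) (√(2 * l + 2) + 2)) := by
  set Φ : ℝ → ℝ := fun v =>
    2 * l * (gaussFunctional (l - 1) 1 (√((2 * l + 2) + 1 * v) - 2 * 1)
        + gaussFunctional (l - 1) (-1) (√((2 * l + 2) + 1 * v) - 2 * (-1)))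
      - (gaussFunctional (l + 1) 1 (√((2 * l + 6) + (-1) * v) - 2 * 1)
        + gaussFunctional (l + 1) (-1) (√((2 * l + 6) + (-1) * v) - 2 * (-1))) with hΦ
  have hsq {u : ℝ} (hu : 12 ≤ u) : 3 < √u := lt_sqrt_of_sq_lt (by linarith)
  have hderiv : ∀ v ∈ Set.Icc (0:ℝ) 2, HasDerivAt Φ
      (-(v / 4) * ((2 * l * gaussWeight (l - 2) (√((2 * l + 2) + 1 * v) - 2)
            / √((2 * l + 2) + 1 * v)
          + 2 * l * gaussWeight (l - 2) (√((2 * l + 2) + 1 * v) + 2) / √((2 * l + 2) + 1 * v))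
        - (gaussWeight l (√((2 * l + 6) + (-1) * v) - 2) / √((2 * l + 6) + (-1) * v)
          + gaussWeight l (√((2 * l + 6) + (-1) * v) + 2) / √((2 * l + 6) + (-1) * v)))) v := by
    intro v hv
    have ht := hsq (u := (2 * l + 2) + 1 * v) (by linarith [hv.1])
    have hT := hsq (u := (2 * l + 6) + (-1) * v) (by linarith [hv.2])
    have d1 := hasDerivAt_gaussFunctional_sqrt (p := l - 1) (ε := 1) (by linarith) (by norm_num)
      (lt_trans (by norm_num) ht)
    have d2 := hasDerivAt_gaussFunctional_sqrt (p := l - 1) (ε := -1) (by linarith) (by norm_num)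
      (lt_trans (by norm_num) ht)
    have d3 := hasDerivAt_gaussFunctional_sqrt (p := l + 1) (ε := 1) (by linarith) (by norm_num)
      (lt_trans (by norm_num) hT)
    have d4 := hasDerivAt_gaussFunctional_sqrt (p := l + 1) (ε := -1) (by linarith) (by norm_num)
      (lt_trans (by norm_num) hT)
    refine (((d1.add d2).const_mul (2 * l)).sub (d3.add d4)).congr_deriv ?_
    rw [show l - 1 - 1 = l - 2 by ring, add_sub_cancel_right, mul_one, mul_neg_one,
      sub_neg_eq_add, sub_neg_eq_add]
    field_simp
    ring
  have hanti : StrictAntiOn Φ (Set.Icc 0 2) := by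
    refine strictAntiOn_of_deriv_neg (convex_Icc 0 2)
      (fun v hv => (hderiv v hv).continuousAt.continuousWithinAt) fun v hv => ?_
    rw [interior_Icc] at hv
    rw [(hderiv v ⟨hv.1.le, hv.2.le⟩).deriv]
    have h := gaussWeight_pair_lt (z := 2 - v) (t := √((2 * l + 2) + 1 * v))
      (T := √((2 * l + 6) + (-1) * v)) hl (by linarith [hv.2]) (by linarith [hv.1])
      (hsq (by linarith [hv.1])) (hsq (by linarith [hv.2]))
      (by rw [sq_sqrt (by linarith [hv.1])]; ring) (by rw [sq_sqrt (by linarith [hv.2])]; ring)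
    exact mul_neg_of_neg_of_pos (by linarith [hv.1]) (sub_pos.2 h)
  have h02 := hanti (show (0:ℝ) ∈ Set.Icc 0 2 by norm_num) (show (2:ℝ) ∈ Set.Icc 0 2 by norm_num)
    two_pos
  have hs := hsq (u := 2 * l + 4) (by linarith)
  have hs2 : √(2 * l + 4) ^ 2 = 2 * l + 4 := sq_sqrt (by linarith)
  have hzero : Φ 2 = 0 := by
    have r1 := gaussFunctional_recursion (l := l) (ε := 1) (x := √(2 * l + 4) - 2 * 1)
      (by linarith) (by linarith) (by linarith)
    have r2 := gaussFunctional_recursion (l := l) (ε := -1) (x := √(2 * l + 4) - 2 * (-1))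
      (by linarith) (by linarith) (by linarith)
    have e1 : 2 * l + 2 + 1 * 2 = 2 * l + 4 := by ring
    have e2 : 2 * l + 6 + (-1) * 2 = 2 * l + 4 := by ring
    simp only [hΦ, e1, e2]
    linarith
  rw [hzero] at h02
  simp only [hΦ, mul_zero, add_zero, mul_one, mul_neg_one, sub_neg_eq_add] at h02
  linarith

/-- The induction-step inequality
`f_{λ+2}(a_{λ+2}) + g_{λ+2}(b_{λ+2}) < 2λ (f_λ(a_λ) + g_λ(b_λ))`
for `λ > λ₀ = (28 + 11√7)/9`. -/
theorem induction_step_inequality (c0 M : ℝ) (hc0 : 0 < c0)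
    (hc0eq : exp (-c0 ^ 2 / 4) = 2 * ∫ x in (0:ℝ)..c0, exp (-x ^ 2 / 4))
    (hM : M = ∫ x in (0:ℝ)..c0, exp (-x ^ 2 / 4))
    (f g : ℝ → ℝ → ℝ) (A B : ℝ → ℝ)
    (hf : ∀ mu a : ℝ, f mu a = 2 * M * a ^ (mu - 1) * exp (-a ^ 2 / 4)
        - 4 * M * ∫ r in (0:ℝ)..a, r ^ (mu - 1) * exp (-r ^ 2 / 4))
    (hg : ∀ mu b : ℝ, g mu b = 2 * M * b ^ (mu - 1) * exp (-b ^ 2 / 4)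
        + 4 * M * ∫ r in (0:ℝ)..b, r ^ (mu - 1) * exp (-r ^ 2 / 4))
    (hA : ∀ mu : ℝ, A mu = -2 + Real.sqrt (2 * (1 + mu)))
    (hB : ∀ mu : ℝ, B mu = 2 + Real.sqrt (2 * (1 + mu)))
    (lam : ℝ) (hlam : (28 + 11 * Real.sqrt 7) / 9 < lam) :
    f (lam + 2) (A (lam + 2)) + g (lam + 2) (B (lam + 2))
      < 2 * lam * (f lam (A lam) + g lam (B lam)) := by
  have hs7 : (2:ℝ) < √7 := lt_sqrt_of_sq_lt (by norm_num)
  have hl : 5 ≤ lam := by linarith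
  have hMpos : 0 < M := by
    have := exp_pos (-c0 ^ 2 / 4)
    linarith
  have hf' : ∀ mu a, f mu a = 2 * M * gaussFunctional (mu - 1) 1 a := fun mu a => by
    rw [hf, gaussFunctional]
    simp only [gaussWeight]
    ring
  have hg' : ∀ mu b, g mu b = 2 * M * gaussFunctional (mu - 1) (-1) b := fun mu b => by
    rw [hg, gaussFunctional]
    simp only [gaussWeight]
    ring
  have e1 : A (lam + 2) = √(2 * lam + 6) - 2 := by rw [hA]; ring_nf
  have e2 : B (lam + 2) = √(2 * lam + 6) + 2 := by rw [hB]; ring_nf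
  have e3 : A lam = √(2 * lam + 2) - 2 := by rw [hA]; ring_nf
  have e4 : B lam = √(2 * lam + 2) + 2 := by rw [hB]; ring_nf
  rw [hf', hg', hf', hg', e1, e2, e3, e4, show lam + 2 - 1 = lam + 1 by ring]
  have := mul_lt_mul_of_pos_left (gaussFunctional_step hl) (mul_pos two_pos hMpos)
  linarith
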